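/- Let m ≥ 0 and d ≥ 1 be integers and let L = L_{2d}^{(m)} = 2U ⊕ mE8(−1) ⊕ ⟨−2d⟩. Let r ∈ L be a primitive vector with (r,r) = −2 and let K_r = {x ∈ L : (x,r) = 0} with the restricted form. If div(r) = 1 then K_r is isometric to K_{2d}^{(m)} = U ⊕ mE8(−1) ⊕ ⟨2⟩ ⊕ ⟨−2d⟩. If div(r) = 2 (so that d ≡ 1 mod 4) then K_r is isometric to N_{2d}^{(m)} = U ⊕ mE8(−1) ⊕ B, where B is the rank 2 lattice with Gram matrix [[2,1],[1,(1−d)/2]]. -/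

import Mathlib

/-- The hyperbolic plane `U`, with Gram matrix `[[0,1],[1,0]]`. -/
def gramU : Matrix (Fin 2) (Fin 2) ℤ := !![0, 1; 1, 0]

/-- The Gram matrix of `E₈(−1)`: the negated Cartan (= Gram) matrix of the `E₈` root
lattice. -/
def gramE8neg : Matrix (Fin 8) (Fin 8) ℤ := -CartanMatrix.E₈

/-- The Gram matrix of `m` orthogonal copies of `E₈(−1)`. -/
def gramE8copies (m : ℕ) : Matrix (Fin m × Fin 8) (Fin m × Fin 8) ℤ :=
  Matrix.of fun p q => if p.1 = q.1 then gramE8neg p.2 q.2 else 0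

/-- Index set for `II_{2,8m+2} = 2U ⊕ mE₈(−1)`. -/
abbrev IdxII (m : ℕ) : Type := (Fin 2 ⊕ Fin 2) ⊕ Fin m × Fin 8

/-- The Gram matrix of the even unimodular lattice `II_{2,8m+2} = 2U ⊕ mE₈(−1)`. -/
def gramII (m : ℕ) : Matrix (IdxII m) (IdxII m) ℤ :=
  Matrix.fromBlocks (Matrix.fromBlocks gramU 0 0 gramU) 0 0 (gramE8copies m)

/-- Index set for `L_{2d}^{(m)} = 2U ⊕ mE₈(−1) ⊕ ⟨−2d⟩`. -/
abbrev IdxL (m : ℕ) : Type := IdxII m ⊕ Fin 1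

/-- The Gram matrix of `L_{2d}^{(m)} = 2U ⊕ mE₈(−1) ⊕ ⟨−2d⟩`. -/
def gramL (m d : ℕ) : Matrix (IdxL m) (IdxL m) ℤ :=
  Matrix.fromBlocks (gramII m) 0 0 !![-(2 * (d : ℤ))]

/-- The bilinear form on `ι → ℤ` associated to a Gram matrix `G`:
`⟨x, y⟩ = ∑ i j, x i * G i j * y j`. -/
def bilin {ι : Type} [Fintype ι] (G : Matrix ι ι ℤ) (x y : ι → ℤ) : ℤ :=
  ∑ i, ∑ j, x i * G i j * y j

/-- `r` is primitive: `ℚr ∩ L = ℤr`, equivalently `r` is not a nontrivial integer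
multiple of a lattice vector. -/
def IsPrim {ι : Type} (r : ι → ℤ) : Prop :=
  ∀ (k : ℤ) (x : ι → ℤ), r = k • x → IsUnit k

/-- `s = div(r)`: the positive generator of the ideal `{(r,l) : l ∈ L} ⊆ ℤ`. -/
def IsDivisorOf {ι : Type} [Fintype ι] (G : Matrix ι ι ℤ) (r : ι → ℤ) (s : ℤ) : Prop :=
  0 < s ∧ (∀ l : ι → ℤ, s ∣ bilin G r l) ∧ ∃ l : ι → ℤ, bilin G r l = s

/-- Two lattices, given as `ℤ`-modules with `ℤ`-valued bilinear forms, are isometric. -/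
def LatIsometric {M N : Type} [AddCommGroup M] [Module ℤ M] [AddCommGroup N] [Module ℤ N]
    (BM : M → M → ℤ) (BN : N → N → ℤ) : Prop :=
  ∃ e : M ≃ₗ[ℤ] N, ∀ x y : M, BN (e x) (e y) = BM x y

/-- The orthogonal complement `K_r = {x : (x,r) = 0}` of `r`, as a `ℤ`-submodule. -/
def orthC {ι : Type} [Fintype ι] (G : Matrix ι ι ℤ) (r : ι → ℤ) :
    Submodule ℤ (ι → ℤ) where
  carrier := {x | bilin G x r = 0}
  zero_mem' := by simp [bilin]
  add_mem' := by
    intro a b ha hb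
    simp only [Set.mem_setOf_eq, bilin, Pi.add_apply, add_mul, Finset.sum_add_distrib] at *
    rw [ha, hb, add_zero]
  smul_mem' := by
    intro c x hx
    simp only [Set.mem_setOf_eq, bilin, Pi.smul_apply, smul_eq_mul, mul_assoc,
      ← Finset.mul_sum] at *
    rw [hx, mul_zero]

/-- Index set for `K_{2d}^{(m)} = U ⊕ mE₈(−1) ⊕ ⟨2⟩ ⊕ ⟨−2d⟩`. -/
abbrev IdxK2d (m : ℕ) : Type := ((Fin 2 ⊕ Fin m × Fin 8) ⊕ Fin 1) ⊕ Fin 1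

/-- The Gram matrix of `K_{2d}^{(m)} = U ⊕ mE₈(−1) ⊕ ⟨2⟩ ⊕ ⟨−2d⟩`. -/
def gramK2d (m d : ℕ) : Matrix (IdxK2d m) (IdxK2d m) ℤ :=
  Matrix.fromBlocks
    (Matrix.fromBlocks (Matrix.fromBlocks gramU 0 0 (gramE8copies m)) 0 0 !![(2 : ℤ)])
    0 0 !![-(2 * (d : ℤ))]

/-- Index set for `N_{2d}^{(m)} = U ⊕ mE₈(−1) ⊕ B`. -/
abbrev IdxN2d (m : ℕ) : Type := (Fin 2 ⊕ Fin m × Fin 8) ⊕ Fin 2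

/-- The Gram matrix of `N_{2d}^{(m)} = U ⊕ mE₈(−1) ⊕ B`, where `B` is the rank 2
lattice with Gram matrix `[[2,1],[1,(1−d)/2]]`. -/
def gramN2d (m d : ℕ) : Matrix (IdxN2d m) (IdxN2d m) ℤ :=
  Matrix.fromBlocks (Matrix.fromBlocks gramU 0 0 (gramE8copies m)) 0 0
    !![2, 1; 1, (1 - (d : ℤ)) / 2]

/-!
Regard an even lattice as an integral quadratic form, whose polar form is the bilinear form of the
lattice. In `U ⊕ U ⊕ P`, Eichler transvections and coordinate swaps let one run the Euclidean
algorithm on the first coordinate, so a vector whose divisor is `D` is moved to some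
`(D e + b f, 0, p)`, where `e, f` is the standard basis of the first hyperbolic plane. There `p` can
be changed modulo `D` at the cost of changing `b`, which is determined by the norm. When the
quadratic form takes the value `-1`, this leaves one orbit for `D = 1`, that of `e - f`, and one for
`D = 2`, that of `2 e + 2β f + h` with `h` the generator of `⟨-2d⟩` and `d = 4β + 1`. The orthogonal
complement of each of these two vectors is visible.
-/

open QuadraticMap (polar)

section SameOrbit

variable {R M M₁ M₂ : Type*} [CommRing R] [AddCommGroup M] [Module R M]
  [AddCommGroup M₁] [Module R M₁] [AddCommGroup M₂] [Module R M₂]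

/-- `x` and `y` lie in the same orbit of the orthogonal group of the quadratic form `Q`. -/
def SameOrbit (Q : QuadraticForm R M) (x y : M) : Prop :=
  ∃ e : Q.IsometryEquiv Q, e x = y

/-- `D` generates the ideal `{(x, l) : l ∈ M}`, where `(·,·)` is the polar form of `Q`; the
counterpart for quadratic forms of `IsDivisorOf`, without the normalization `0 < D`. -/
def IsPolarDivisor (Q : QuadraticForm R M) (x : M) (D : R) : Prop :=
  (∀ l, D ∣ polar Q x l) ∧ ∃ l, polar Q x l = D

theorem polar_isometryEquiv {Q₁ : QuadraticForm R M₁} {Q₂ : QuadraticForm R M₂}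
    (e : Q₁.IsometryEquiv Q₂) (x y : M₁) : polar Q₂ (e x) (e y) = polar Q₁ x y := by
  simp only [polar, ← map_add, QuadraticMap.IsometryEquiv.map_app]

namespace SameOrbit

variable {Q : QuadraticForm R M} {x y z : M}

theorem refl (Q : QuadraticForm R M) (x : M) : SameOrbit Q x x :=
  ⟨.refl Q, rfl⟩

theorem trans (hxy : SameOrbit Q x y) (hyz : SameOrbit Q y z) : SameOrbit Q x z := by
  obtain ⟨e, rfl⟩ := hxy
  obtain ⟨f, rfl⟩ := hyz
  exact ⟨e.trans f, rfl⟩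

theorem prod {Q₁ : QuadraticForm R M₁} {Q₂ : QuadraticForm R M₂} {x₁ y₁ : M₁} {x₂ y₂ : M₂}
    (h₁ : SameOrbit Q₁ x₁ y₁) (h₂ : SameOrbit Q₂ x₂ y₂) :
    SameOrbit (Q₁.prod Q₂) (x₁, x₂) (y₁, y₂) := by
  obtain ⟨e₁, rfl⟩ := h₁
  obtain ⟨e₂, rfl⟩ := h₂
  exact ⟨e₁.prod e₂, rfl⟩

theorem prod_left_comm (Q₁ : QuadraticForm R M₁) (Q₂ : QuadraticForm R M₂) (x y : M₁) (z : M₂) :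
    SameOrbit (Q₁.prod (Q₁.prod Q₂)) (x, y, z) (y, x, z) := by
  exact ⟨{ toFun v := (v.2.1, v.1, v.2.2)
           invFun v := (v.2.1, v.1, v.2.2)
           map_add' _ _ := rfl
           map_smul' _ _ := rfl
           left_inv _ := rfl
           right_inv _ := rfl
           map_app' _ := add_left_comm _ _ _ }, rfl⟩

theorem map_eq (h : SameOrbit Q x y) : Q y = Q x := by
  obtain ⟨e, rfl⟩ := h
  exact e.map_app x

theorem isPolarDivisor {D : R} (h : SameOrbit Q x y) (hx : IsPolarDivisor Q x D) :
    IsPolarDivisor Q y D := by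
  obtain ⟨e, rfl⟩ := h
  obtain ⟨hdvd, l, hl⟩ := hx
  refine ⟨fun v => ?_, e l, by rw [polar_isometryEquiv, hl]⟩
  rw [← e.apply_symm_apply v, polar_isometryEquiv]
  exact hdvd _

end SameOrbit

end SameOrbit

section HyperbolicPlane

variable {R M : Type*} [CommRing R] [AddCommGroup M] [Module R M]

/-- The quadratic form `(a, b) ↦ a * b`, whose polar form is that of the hyperbolic plane `U`. -/
def hyperbolicPlane (R : Type*) [CommRing R] : QuadraticForm R (R × R) :=
  QuadraticMap.linMulLin (.fst R R R) (.snd R R R)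

@[simp]
theorem hyperbolicPlane_apply (x : R × R) : hyperbolicPlane R x = x.1 * x.2 := rfl

@[simp]
theorem polar_hyperbolicPlane (x y : R × R) :
    polar (hyperbolicPlane R) x y = x.1 * y.2 + x.2 * y.1 := by
  simp only [polar, hyperbolicPlane_apply, Prod.fst_add, Prod.snd_add]
  ring

theorem sameOrbit_hyperbolicPlane_swap (a b : R) :
    SameOrbit (hyperbolicPlane R) (a, b) (b, a) :=
  ⟨{ LinearEquiv.prodComm R R R with map_app' := fun v => mul_comm v.2 v.1 }, rfl⟩

theorem sameOrbit_hyperbolicPlane_units_smul (u : Rˣ) (a b : R) :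
    SameOrbit (hyperbolicPlane R) (a, b) (u • a, u⁻¹ • b) :=
  ⟨{ (LinearEquiv.smulOfUnit u).prodCongr (LinearEquiv.smulOfUnit u⁻¹) with
      map_app' := fun v => (smul_mul_smul_comm u v.1 u⁻¹ v.2).trans (by simp) }, rfl⟩

/-- The Eichler transvection of `U ⊕ M` along the isotropic vector `(0, 1)` of `U` and `w ∈ M`. -/
def eichlerTransvection (Q : QuadraticForm R M) (w : M) :
    ((hyperbolicPlane R).prod Q).IsometryEquiv ((hyperbolicPlane R).prod Q) where
  toFun v := ((v.1.1, v.1.2 - polar Q w v.2 - v.1.1 * Q w), v.2 + v.1.1 • w)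
  invFun v := ((v.1.1, v.1.2 + polar Q w v.2 - v.1.1 * Q w), v.2 - v.1.1 • w)
  map_add' u v := by
    ext
    · rfl
    · simp only [Prod.fst_add, Prod.snd_add, QuadraticMap.polar_add_right]
      ring
    · simp only [Prod.fst_add, Prod.snd_add]
      module
  map_smul' k v := by
    ext
    · rfl
    · simp only [Prod.smul_fst, Prod.smul_snd, QuadraticMap.polar_smul_right, smul_eq_mul,
        RingHom.id_apply]
      ring
    · simp only [Prod.smul_fst, Prod.smul_snd, smul_eq_mul, RingHom.id_apply]
      module
  left_inv v := by
    ext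
    · rfl
    · simp only [QuadraticMap.polar_add_right, QuadraticMap.polar_smul_right,
        QuadraticMap.polar_self, smul_eq_mul, nsmul_eq_mul]
      ring
    · exact add_sub_cancel_right _ _
  right_inv v := by
    ext
    · rfl
    · simp only [QuadraticMap.polar_sub_right, QuadraticMap.polar_smul_right,
        QuadraticMap.polar_self, smul_eq_mul, nsmul_eq_mul]
      ring
    · exact sub_add_cancel _ _
  map_app' v := by
    simp only [QuadraticMap.prod_apply, hyperbolicPlane_apply, QuadraticMap.map_add Q,
      QuadraticMap.map_smul, QuadraticMap.polar_smul_right, QuadraticMap.polar_comm Q w,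
      smul_eq_mul]
    ring

theorem sameOrbit_eichlerTransvection (Q : QuadraticForm R M) (a b : R) (x w : M) :
    SameOrbit ((hyperbolicPlane R).prod Q)
      ((a, b), x) ((a, b - polar Q w x - a * Q w), x + a • w) :=
  ⟨eichlerTransvection Q w, rfl⟩

/-- In `U ⊕ M`, the first coordinate and the norm determine the second coordinate, so a
transvection moves the `M`-component freely modulo the first coordinate. -/
theorem sameOrbit_of_eq_add_smul [IsDomain R] {Q : QuadraticForm R M} {a b b' : R} {x y w : M}
    (ha : a ≠ 0) (hy : y = x + a • w) (hnorm : a * b + Q x = a * b' + Q y) :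
    SameOrbit ((hyperbolicPlane R).prod Q) ((a, b), x) ((a, b'), y) := by
  subst hy
  have horbit := sameOrbit_eichlerTransvection Q a b x w
  have hsnd := horbit.map_eq
  simp only [QuadraticMap.prod_apply, hyperbolicPlane_apply, hnorm, add_left_inj] at hsnd
  rwa [mul_left_cancel₀ ha hsnd] at horbit

end HyperbolicPlane

section Descent

variable {R M P : Type*} [EuclideanDomain R] [AddCommGroup M] [Module R M]
  [AddCommGroup P] [Module R P]

theorem exists_sameOrbit_fst_ne_zero {Q : QuadraticForm R M} {r : (R × R) × M}
    (hr : ∃ l, polar ((hyperbolicPlane R).prod Q) r l ≠ 0) :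
    ∃ s, SameOrbit ((hyperbolicPlane R).prod Q) r s ∧ s.1.1 ≠ 0 := by
  by_contra! hzero
  obtain ⟨⟨a, b⟩, x⟩ := r
  obtain ⟨l, hl⟩ := hr
  have hswap (c : R) (y : M) := (sameOrbit_hyperbolicPlane_swap a c).prod (.refl Q y)
  have ha : a = 0 := hzero _ (.refl _ _)
  have hb : b = 0 := hzero _ (hswap b x)
  have htrans := hzero _ ((sameOrbit_eichlerTransvection Q a b x l.2).trans (hswap _ _))
  simp only [ha, hb, zero_sub, zero_mul, sub_zero, neg_eq_zero] at htrans
  simp [ha, hb, QuadraticMap.polar_comm Q x, htrans] at hl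

/-- `s ∈ U ⊕ M` has nonzero first coordinate, minimal for the Euclidean order of `R` among the
nonzero first coordinates of the vectors in its orbit. -/
def IsFstMinimal (Q : QuadraticForm R M) (s : (R × R) × M) : Prop :=
  s.1.1 ≠ 0 ∧
    ∀ t, SameOrbit ((hyperbolicPlane R).prod Q) s t → t.1.1 ≠ 0 → ¬EuclideanDomain.r t.1.1 s.1.1

theorem exists_sameOrbit_isFstMinimal {Q : QuadraticForm R M} {r : (R × R) × M}
    (hr : ∃ l, polar ((hyperbolicPlane R).prod Q) r l ≠ 0) :
    ∃ s, SameOrbit ((hyperbolicPlane R).prod Q) r s ∧ IsFstMinimal Q s := by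
  obtain ⟨s, ⟨hrs, hs⟩, hmin⟩ :=
    (InvImage.wf (fun s : (R × R) × M => s.1.1) EuclideanDomain.r_wellFounded).has_min
      {s | SameOrbit ((hyperbolicPlane R).prod Q) r s ∧ s.1.1 ≠ 0} (exists_sameOrbit_fst_ne_zero hr)
  exact ⟨s, hrs, hs, fun t hst ht => hmin t ⟨hrs.trans hst, ht⟩⟩

namespace IsFstMinimal

theorem congr {Q : QuadraticForm R M} {s t : (R × R) × M} (hs : IsFstMinimal Q s)
    (hst : SameOrbit ((hyperbolicPlane R).prod Q) s t) (heq : t.1.1 = s.1.1) :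
    IsFstMinimal Q t := by
  refine ⟨heq ▸ hs.1, fun u htu hu => ?_⟩
  rw [heq]
  exact hs.2 u (hst.trans htu) hu

theorem fst_dvd {Q : QuadraticForm R M} {s : (R × R) × M} (hs : IsFstMinimal Q s) {z : R}
    (h : ∀ k, ∃ t, SameOrbit ((hyperbolicPlane R).prod Q) s t ∧ t.1.1 = z - s.1.1 * k) :
    s.1.1 ∣ z := by
  obtain ⟨t, hst, ht⟩ := h (z / s.1.1)
  rw [← EuclideanDomain.mod_eq_sub_mul_div] at ht
  by_contra hndvd
  exact hs.2 t hst (ht ▸ mt EuclideanDomain.mod_eq_zero.mp hndvd)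
    (ht ▸ EuclideanDomain.mod_lt z hs.1)

variable {Q : QuadraticForm R P} {a b c d : R} {p : P}

theorem fst_dvd_fst (hs : IsFstMinimal ((hyperbolicPlane R).prod Q) ((a, b), (c, d), p)) :
    a ∣ c := by
  refine hs.fst_dvd fun k => ⟨_, (sameOrbit_eichlerTransvection _ a b _ ((-k, 0), 0)).trans
    (.prod_left_comm _ _ _ _ _), ?_⟩
  simp [sub_eq_add_neg]

theorem fst_dvd_snd (hs : IsFstMinimal ((hyperbolicPlane R).prod Q) ((a, b), (c, d), p)) :
    a ∣ d :=
  (hs.congr ((SameOrbit.refl _ _).prod ((sameOrbit_hyperbolicPlane_swap c d).prod (.refl Q p)))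
    rfl).fst_dvd_fst

theorem exists_sameOrbit_zero
    (hs : IsFstMinimal ((hyperbolicPlane R).prod Q) ((a, b), (c, d), p)) :
    ∃ b', SameOrbit ((hyperbolicPlane R).prod ((hyperbolicPlane R).prod Q))
      ((a, b), (c, d), p) ((a, b'), 0, p) := by
  obtain ⟨c', hc⟩ := hs.fst_dvd_fst
  obtain ⟨d', hd⟩ := hs.fst_dvd_snd
  have horbit := sameOrbit_eichlerTransvection ((hyperbolicPlane R).prod Q) a b ((c, d), p)
    ((-c', -d'), 0)
  refine ⟨_, (show ((c, d), p) + a • ((-c', -d'), (0 : P)) = (0, p) from ?_) ▸ horbit⟩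
  ext <;> simp [hc, hd]

theorem fst_dvd_polar (hs : IsFstMinimal ((hyperbolicPlane R).prod Q) ((a, b), 0, p))
    (l : (R × R) × (R × R) × P) :
    a ∣ polar ((hyperbolicPlane R).prod ((hyperbolicPlane R).prod Q)) ((a, b), 0, p) l := by
  have hsub (y : P) : a ∣ b - polar Q y p := by
    -- The vector `((1, k - Q y), y)` is chosen to have norm `k`.
    refine hs.fst_dvd fun k => ⟨_, (sameOrbit_eichlerTransvection _ a b _ ((1, k - Q y), y)).trans
      ((sameOrbit_hyperbolicPlane_swap _ _).prod (.refl _ _)), ?_⟩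
    simp
  have hb : a ∣ b := by simpa using hsub 0
  have hp : a ∣ polar Q p l.2.2 := by
    rw [QuadraticMap.polar_comm]
    exact (dvd_sub_right hb).mp (hsub l.2.2)
  simpa using dvd_add (dvd_add (dvd_mul_right a l.1.2) (hb.mul_right l.1.1)) hp

end IsFstMinimal

theorem exists_sameOrbit_of_isPolarDivisor {Q : QuadraticForm R P} {r : (R × R) × (R × R) × P}
    {D : R} (hD : D ≠ 0)
    (hr : IsPolarDivisor ((hyperbolicPlane R).prod ((hyperbolicPlane R).prod Q)) r D) :
    ∃ b p, SameOrbit ((hyperbolicPlane R).prod ((hyperbolicPlane R).prod Q))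
      r ((D, b), 0, p) := by
  obtain ⟨⟨⟨a, b₀⟩, ⟨c, d⟩, p⟩, hrs, hmin⟩ :=
    exists_sameOrbit_isFstMinimal (hr.2.imp fun _ hl => hl.trans_ne hD)
  obtain ⟨b, hst⟩ := hmin.exists_sameOrbit_zero
  obtain ⟨hdvd, l, hl⟩ := (hrs.trans hst).isPolarDivisor hr
  have haD : a ∣ D := hl ▸ (hmin.congr hst rfl).fst_dvd_polar l
  have hDa : D ∣ a := by simpa using hdvd ((0, 1), 0, 0)
  obtain ⟨u, hu⟩ := associated_of_dvd_dvd haD hDa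
  have hunit := (sameOrbit_hyperbolicPlane_units_smul u a b).prod
    (.refl ((hyperbolicPlane R).prod Q) (0, p))
  rw [Units.smul_def, smul_eq_mul, mul_comm, hu] at hunit
  exact ⟨_, p, (hrs.trans hst).trans hunit⟩

theorem sameOrbit_of_isPolarDivisor_one {Q : QuadraticForm R P} {r : (R × R) × (R × R) × P} {k : R}
    (hr : IsPolarDivisor ((hyperbolicPlane R).prod ((hyperbolicPlane R).prod Q)) r 1)
    (hnorm : (hyperbolicPlane R).prod ((hyperbolicPlane R).prod Q) r = k) :
    SameOrbit ((hyperbolicPlane R).prod ((hyperbolicPlane R).prod Q)) r ((1, k), 0, 0) := by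
  obtain ⟨b, p, horbit⟩ := exists_sameOrbit_of_isPolarDivisor one_ne_zero hr
  exact horbit.trans (sameOrbit_of_eq_add_smul (w := (0, -p)) one_ne_zero (by simp)
    (by simp [← hnorm, ← horbit.map_eq]))

end Descent

section EvenGramMatrix

theorem exists_quadraticForm_polar_eq {V : Type*} [AddCommGroup V] [Module ℤ V]
    {B : LinearMap.BilinForm ℤ V} (hsymm : B.IsSymm) (heven : ∀ x, Even (B x x)) :
    ∃ Q : QuadraticForm ℤ V, ∀ x y, polar Q x y = B x y := by
  have hpolar (x y : V) : polar (fun v => B v v / 2) x y = B x y := by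
    obtain ⟨a, ha⟩ := heven x
    obtain ⟨b, hb⟩ := heven y
    have hadd : B (x + y) (x + y) = a + a + (b + b) + 2 * B x y := by
      simp only [map_add, LinearMap.add_apply, ha, hb, hsymm.eq y x]
      ring
    simp only [polar, hadd, ha, hb]
    omega
  refine ⟨.ofPolar (fun v => B v v / 2) (fun k v => ?_) (fun u v w => ?_) (fun k v w => ?_), hpolar⟩
  · simp only [map_smul, LinearMap.smul_apply, smul_eq_mul, ← mul_assoc,
      Int.mul_ediv_assoc _ (heven v).two_dvd]
  · simp only [hpolar, map_add, LinearMap.add_apply]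
  · simp only [hpolar, map_smul, LinearMap.smul_apply]

theorem dvd_of_dvd_mulVec {R n : Type*} [CommRing R] [Fintype n] [DecidableEq n] {A : Matrix n n R}
    {k : R} {x : n → R} (hk : IsCoprime k A.det) (h : ∀ i, k ∣ A.mulVec x i) (i : n) : k ∣ x i := by
  have hadj : A.adjugate.mulVec (A.mulVec x) = A.det • x := by
    rw [Matrix.mulVec_mulVec, Matrix.adjugate_mul, Matrix.smul_mulVec, Matrix.one_mulVec]
  refine hk.dvd_of_dvd_mul_left ?_
  rw [← smul_eq_mul, ← Pi.smul_apply, ← hadj]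
  exact Finset.dvd_sum fun j _ => (h j).mul_left _

theorem bilin_of_fin_one (a : ℤ) (x y : Fin 1 → ℤ) : bilin !![a] x y = a * x 0 * y 0 := by
  simp [bilin, mul_comm a]

theorem bilin_of_fin_two (a b c d : ℤ) (x y : Fin 2 → ℤ) :
    bilin !![a, b; c, d] x y =
      a * x 0 * y 0 + b * x 0 * y 1 + (c * x 1 * y 0 + d * x 1 * y 1) := by
  simp [bilin, mul_comm]

theorem bilin_gramU (x y : Fin 2 → ℤ) : bilin gramU x y = x 0 * y 1 + x 1 * y 0 := by
  simp [gramU, bilin_of_fin_two]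

variable {ι : Type} [Fintype ι]

theorem bilin_fromBlocks {κ : Type} [Fintype κ] (A : Matrix ι ι ℤ) (D : Matrix κ κ ℤ)
    (x y : ι ⊕ κ → ℤ) :
    bilin (Matrix.fromBlocks A 0 0 D) x y =
      bilin A (fun i => x (.inl i)) (fun i => y (.inl i)) +
        bilin D (fun k => x (.inr k)) (fun k => y (.inr k)) := by
  simp [bilin]

theorem bilin_eq_toBilin' [DecidableEq ι] (M : Matrix ι ι ℤ) (x y : ι → ℤ) :
    bilin M x y = Matrix.toBilin' M x y :=
  (Matrix.toBilin'_apply M x y).symm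

theorem even_toBilin'_self [DecidableEq ι] {M : Matrix ι ι ℤ} (hsymm : M.IsSymm)
    (hdiag : ∀ i, Even (M i i)) (x : ι → ℤ) : Even (Matrix.toBilin' M x x) := by
  rw [← Finset.univ_sum_single x]
  refine Finset.sum_induction _ (fun v => Even (Matrix.toBilin' M v v)) (fun u v hu hv => ?_)
    (by simp) (fun i _ => ?_)
  · simp only [map_add, LinearMap.add_apply, (Matrix.isSymm_toBilin'_iff_isSymm.mpr hsymm).eq v u]
    grind
  · rw [← mul_one (x i), ← smul_eq_mul, Pi.single_smul', map_smul, map_smul, LinearMap.smul_apply,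
      Matrix.toBilin'_single]
    exact ((hdiag i).mul_left _).mul_left _

theorem dvd_of_dvd_bilin [DecidableEq ι] {M : Matrix ι ι ℤ} {k : ℤ} {x : ι → ℤ}
    (hsymm : M.IsSymm) (hk : IsCoprime k M.det) (h : ∀ y, k ∣ bilin M x y) (i : ι) : k ∣ x i := by
  refine dvd_of_dvd_mulVec hk (fun j => ?_) i
  have hj := h (Pi.single j 1)
  rwa [bilin_eq_toBilin', (Matrix.isSymm_toBilin'_iff_isSymm.mpr hsymm).eq,
    Matrix.toBilin'_apply', single_one_dotProduct] at hj

theorem exists_quadraticForm_polar_eq_bilin {M : Matrix ι ι ℤ} (hsymm : M.IsSymm)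
    (hdiag : ∀ i, Even (M i i)) :
    ∃ Q : QuadraticForm ℤ (ι → ℤ), ∀ x y, polar Q x y = bilin M x y := by
  classical
  simp only [bilin_eq_toBilin']
  exact exists_quadraticForm_polar_eq (Matrix.isSymm_toBilin'_iff_isSymm.mpr hsymm)
    (even_toBilin'_self hsymm hdiag)

end EvenGramMatrix

section NormalForm

/-- The quadratic form of `2U ⊕ M ⊕ ⟨-2d⟩`, where `Q` is the quadratic form of `M`. -/
def formL {R M : Type*} [CommRing R] [AddCommGroup M] [Module R M] (Q : QuadraticForm R M)
    (d : R) : QuadraticForm R ((R × R) × (R × R) × M × R) :=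
  (hyperbolicPlane R).prod ((hyperbolicPlane R).prod (Q.prod ((-d) • QuadraticMap.sq)))

theorem formL_apply {R M : Type*} [CommRing R] [AddCommGroup M] [Module R M]
    (Q : QuadraticForm R M) (d : R) (x : (R × R) × (R × R) × M × R) :
    formL Q d x =
      x.1.1 * x.1.2 + (x.2.1.1 * x.2.1.2 + (Q x.2.2.1 - d * (x.2.2.2 * x.2.2.2))) := by
  simp [formL, sub_eq_add_neg]

theorem polar_formL {R M : Type*} [CommRing R] [AddCommGroup M] [Module R M]
    (Q : QuadraticForm R M) (d : R) (x y : (R × R) × (R × R) × M × R) :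
    polar (formL Q d) x y =
      x.1.1 * y.1.2 + x.1.2 * y.1.1 + (x.2.1.1 * y.2.1.2 + x.2.1.2 * y.2.1.1 +
        (polar Q x.2.2.1 y.2.2.1 - 2 * d * x.2.2.2 * y.2.2.2)) := by
  simp only [polar, formL_apply, Prod.fst_add, Prod.snd_add]
  ring

theorem polar_formL_right {R M : Type*} [CommRing R] [AddCommGroup M] [Module R M]
    (Q : QuadraticForm R M) (d : R) (v : (R × R) × (R × R) × M × R) (a b k : R) :
    polar (formL Q d) v ((a, b), 0, 0, k) = v.1.1 * b + v.1.2 * a - 2 * d * v.2.2.2 * k := by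
  simp only [polar_formL, Prod.fst_zero, Prod.snd_zero, QuadraticMap.polar_zero_right]
  ring

variable {ι : Type} [Fintype ι] [DecidableEq ι] {M : Matrix ι ι ℤ} {Q : QuadraticForm ℤ (ι → ℤ)}

theorem exists_sameOrbit_of_isPolarDivisor_two (hsymm : M.IsSymm) (hdet : Odd M.det)
    (hQ : ∀ x y, polar Q x y = bilin M x y) {d : ℤ} {r : (ℤ × ℤ) × (ℤ × ℤ) × (ι → ℤ) × ℤ}
    (hr : IsPolarDivisor (formL Q d) r 2) (hnorm : formL Q d r = -1) :
    ∃ β, d = 4 * β + 1 ∧ SameOrbit (formL Q d) r ((2, 2 * β), 0, 0, 1) := by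
  obtain ⟨b, ⟨p, k⟩, horbit⟩ : ∃ b p, SameOrbit (formL Q d) r ((2, b), 0, p) :=
    exists_sameOrbit_of_isPolarDivisor two_ne_zero hr
  have hdvd := (horbit.isPolarDivisor hr).1
  simp only [polar_formL] at hdvd
  obtain ⟨b, rfl⟩ : 2 ∣ b := by simpa using hdvd ((1, 0), 0, 0, 0)
  have hp (i : ι) : 2 ∣ p i :=
    dvd_of_dvd_bilin hsymm (Int.isCoprime_two_left.mpr hdet)
      (fun y => by simpa [hQ] using hdvd (0, 0, y, 0)) i
  choose w hw using hp
  obtain rfl : p = (2 : ℤ) • w := funext hw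
  have hnorm' : 2 * (2 * b) + (4 * Q w - d * (k * k)) = -1 := by
    simpa [formL_apply, QuadraticMap.map_smul, -zsmul_eq_mul]
      using horbit.map_eq.trans hnorm
  obtain ⟨j, rfl⟩ : Odd k := by
    have hodd : Odd (d * (k * k)) := ⟨2 * b + 2 * Q w, by linarith⟩
    exact (Int.odd_mul.mp (Int.odd_mul.mp hodd).2).1
  obtain ⟨β, rfl⟩ : ∃ β, d = 4 * β + 1 := ⟨b + Q w - d * j * (j + 1), by linarith⟩
  refine ⟨β, rfl, horbit.trans (sameOrbit_of_eq_add_smul (w := (0, -w, -j)) two_ne_zero ?_ ?_)⟩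
  · ext <;> simp
  · simp only [QuadraticMap.prod_apply, map_zero, zero_add, QuadraticMap.map_smul, smul_apply,
      QuadraticMap.sq_apply, smul_eq_mul, mul_one]
    linarith

end NormalForm

section Coordinates

variable {ι : Type}

/-- The Gram matrix of `2U ⊕ M ⊕ ⟨-2d⟩`, where `M` is given by its Gram matrix. -/
def gramLOf (M : Matrix ι ι ℤ) (d : ℤ) :
    Matrix (((Fin 2 ⊕ Fin 2) ⊕ ι) ⊕ Fin 1) (((Fin 2 ⊕ Fin 2) ⊕ ι) ⊕ Fin 1) ℤ :=
  .fromBlocks (.fromBlocks (.fromBlocks gramU 0 0 gramU) 0 0 M) 0 0 !![-(2 * d)]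

/-- The Gram matrix of `U ⊕ M ⊕ ⟨2⟩ ⊕ ⟨-2d⟩`, where `M` is given by its Gram matrix. -/
def gramKOf (M : Matrix ι ι ℤ) (d : ℤ) :
    Matrix (((Fin 2 ⊕ ι) ⊕ Fin 1) ⊕ Fin 1) (((Fin 2 ⊕ ι) ⊕ Fin 1) ⊕ Fin 1) ℤ :=
  .fromBlocks (.fromBlocks (.fromBlocks gramU 0 0 M) 0 0 !![2]) 0 0 !![-(2 * d)]

/-- The Gram matrix of `U ⊕ M ⊕ B`, where `M` is given by its Gram matrix and `B` has Gram matrix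
`[[2, 1], [1, (1 - d) / 2]]`. -/
def gramNOf (M : Matrix ι ι ℤ) (d : ℤ) :
    Matrix ((Fin 2 ⊕ ι) ⊕ Fin 2) ((Fin 2 ⊕ ι) ⊕ Fin 2) ℤ :=
  .fromBlocks (.fromBlocks gramU 0 0 M) 0 0 !![2, 1; 1, (1 - d) / 2]

/-- The coordinates of a vector of `2U ⊕ M ⊕ ⟨-2d⟩`, grouped by summand. -/
def coordinatesL (ι : Type) :
    (((Fin 2 ⊕ Fin 2) ⊕ ι) ⊕ Fin 1 → ℤ) ≃ₗ[ℤ] (ℤ × ℤ) × (ℤ × ℤ) × (ι → ℤ) × ℤ where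
  toFun x :=
    ((x (.inl (.inl (.inl 0))), x (.inl (.inl (.inl 1)))),
      (x (.inl (.inl (.inr 0))), x (.inl (.inl (.inr 1)))), fun i => x (.inl (.inr i)), x (.inr 0))
  invFun v :=
    Sum.elim (Sum.elim (Sum.elim ![v.1.1, v.1.2] ![v.2.1.1, v.2.1.2]) v.2.2.1) ![v.2.2.2]
  map_add' _ _ := rfl
  map_smul' _ _ := rfl
  left_inv x := by
    ext i
    rcases i with ((i | i) | i) | i <;> first | rfl | fin_cases i <;> rfl
  right_inv _ := rfl

/-- The map from `U ⊕ M ⊕ ⟨2⟩ ⊕ ⟨-2d⟩` to `2U ⊕ M ⊕ ⟨-2d⟩` sending the generator of `⟨2⟩` to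
`e + f`, where `e, f` is the standard basis of the first copy of `U`. -/
def embeddingK (ι : Type) :
    (((Fin 2 ⊕ ι) ⊕ Fin 1) ⊕ Fin 1 → ℤ) →ₗ[ℤ] (ℤ × ℤ) × (ℤ × ℤ) × (ι → ℤ) × ℤ where
  toFun n :=
    ((n (.inl (.inr 0)), n (.inl (.inr 0))),
      (n (.inl (.inl (.inl 0))), n (.inl (.inl (.inl 1)))),
      fun i => n (.inl (.inl (.inr i))), n (.inr 0))
  map_add' _ _ := rfl
  map_smul' _ _ := rfl

/-- The map from `U ⊕ M ⊕ B` to `2U ⊕ M ⊕ ⟨-2d⟩`, for `d = 4β + 1`, sending the basis of `B` to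
`2 e + (2β + 1) f + h` and `e - β f`, where `e, f` is the standard basis of the first copy of `U`
and `h` the generator of `⟨-2d⟩`. -/
def embeddingN (ι : Type) (β : ℤ) :
    ((Fin 2 ⊕ ι) ⊕ Fin 2 → ℤ) →ₗ[ℤ] (ℤ × ℤ) × (ℤ × ℤ) × (ι → ℤ) × ℤ where
  toFun n :=
    ((2 * n (.inr 0) + n (.inr 1), (2 * β + 1) * n (.inr 0) - β * n (.inr 1)),
      (n (.inl (.inl 0)), n (.inl (.inl 1))), fun i => n (.inl (.inr i)), n (.inr 0))
  map_add' x y := by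
    ext <;> simp only [Pi.add_apply, Prod.fst_add, Prod.snd_add] <;> ring
  map_smul' k x := by
    ext <;> simp only [Pi.smul_apply, Prod.smul_fst, Prod.smul_snd, smul_eq_mul, RingHom.id_apply]
      <;> ring

@[simp]
theorem coordinatesL_apply (x : ((Fin 2 ⊕ Fin 2) ⊕ ι) ⊕ Fin 1 → ℤ) :
    coordinatesL ι x =
      ((x (.inl (.inl (.inl 0))), x (.inl (.inl (.inl 1)))),
        (x (.inl (.inl (.inr 0))), x (.inl (.inl (.inr 1)))),
        fun i => x (.inl (.inr i)), x (.inr 0)) :=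
  rfl

@[simp]
theorem embeddingK_apply (n : ((Fin 2 ⊕ ι) ⊕ Fin 1) ⊕ Fin 1 → ℤ) :
    embeddingK ι n =
      ((n (.inl (.inr 0)), n (.inl (.inr 0))),
        (n (.inl (.inl (.inl 0))), n (.inl (.inl (.inl 1)))),
        fun i => n (.inl (.inl (.inr i))), n (.inr 0)) :=
  rfl

@[simp]
theorem embeddingN_apply (β : ℤ) (n : (Fin 2 ⊕ ι) ⊕ Fin 2 → ℤ) :
    embeddingN ι β n =
      ((2 * n (.inr 0) + n (.inr 1), (2 * β + 1) * n (.inr 0) - β * n (.inr 1)),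
        (n (.inl (.inl 0)), n (.inl (.inl 1))), fun i => n (.inl (.inr i)), n (.inr 0)) :=
  rfl

theorem embeddingK_injective (ι : Type) : Function.Injective (embeddingK ι) := by
  intro n n' h
  simp only [embeddingK_apply, Prod.mk.injEq, funext_iff] at h
  ext i
  rcases i with ((i | i) | i) | i <;> try fin_cases i
  all_goals grind

theorem embeddingN_injective (ι : Type) (β : ℤ) : Function.Injective (embeddingN ι β) := by
  intro n n' h
  simp only [embeddingN_apply, Prod.mk.injEq, funext_iff] at h
  ext i
  rcases i with (i | i) | i <;> try fin_cases i
  all_goals grind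

theorem polar_eq_zero_iff_exists_embeddingK_eq {Q : QuadraticForm ℤ (ι → ℤ)} {d : ℤ}
    {v : (ℤ × ℤ) × (ℤ × ℤ) × (ι → ℤ) × ℤ} :
    polar (formL Q d) v ((1, -1), 0, 0, 0) = 0 ↔ ∃ n, embeddingK ι n = v := by
  rw [polar_formL_right]
  constructor
  · intro h
    have hfst : v.1.1 = v.1.2 := by linarith
    refine ⟨Sum.elim (Sum.elim (Sum.elim ![v.2.1.1, v.2.1.2] v.2.2.1) ![v.1.1]) ![v.2.2.2], ?_⟩
    ext <;> simp [hfst]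
  · rintro ⟨n, rfl⟩
    simp

theorem polar_eq_zero_iff_exists_embeddingN_eq {Q : QuadraticForm ℤ (ι → ℤ)} {d β : ℤ}
    (hd : d = 4 * β + 1) {v : (ℤ × ℤ) × (ℤ × ℤ) × (ι → ℤ) × ℤ} :
    polar (formL Q d) v ((2, 2 * β), 0, 0, 1) = 0 ↔ ∃ n, embeddingN ι β n = v := by
  rw [polar_formL_right]
  constructor
  · intro h
    have hsnd : v.1.2 = d * v.2.2.2 - β * v.1.1 := by linarith
    refine ⟨Sum.elim (Sum.elim ![v.2.1.1, v.2.1.2] v.2.2.1) ![v.2.2.2, v.1.1 - 2 * v.2.2.2], ?_⟩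
    ext <;> simp only [embeddingN_apply, Sum.elim_inl, Sum.elim_inr, Matrix.cons_val_zero,
      Matrix.cons_val_one, Matrix.cons_val_fin_one, add_sub_cancel, hsnd, hd]
    ring
  · rintro ⟨n, rfl⟩
    simp only [embeddingN_apply, hd]
    ring

variable [Fintype ι] {M : Matrix ι ι ℤ} {Q : QuadraticForm ℤ (ι → ℤ)}

theorem polar_coordinatesL (hQ : ∀ x y, polar Q x y = bilin M x y) (d : ℤ)
    (x y : ((Fin 2 ⊕ Fin 2) ⊕ ι) ⊕ Fin 1 → ℤ) :
    polar (formL Q d) (coordinatesL ι x) (coordinatesL ι y) = bilin (gramLOf M d) x y := by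
  simp only [polar_formL, hQ, gramLOf, bilin_fromBlocks, bilin_gramU, bilin_of_fin_one,
    coordinatesL_apply]
  ring

theorem polar_embeddingK (hQ : ∀ x y, polar Q x y = bilin M x y) (d : ℤ)
    (x y : ((Fin 2 ⊕ ι) ⊕ Fin 1) ⊕ Fin 1 → ℤ) :
    polar (formL Q d) (embeddingK ι x) (embeddingK ι y) = bilin (gramKOf M d) x y := by
  simp only [polar_formL, hQ, gramKOf, bilin_fromBlocks, bilin_gramU, bilin_of_fin_one,
    embeddingK_apply]
  ring

theorem polar_embeddingN (hQ : ∀ x y, polar Q x y = bilin M x y) {d β : ℤ} (hd : d = 4 * β + 1)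
    (x y : (Fin 2 ⊕ ι) ⊕ Fin 2 → ℤ) :
    polar (formL Q d) (embeddingN ι β x) (embeddingN ι β y) = bilin (gramNOf M d) x y := by
  have hdiv : (1 - d) / 2 = -(2 * β) := by omega
  simp only [polar_formL, hQ, gramNOf, bilin_fromBlocks, bilin_gramU, bilin_of_fin_two, hdiv,
    embeddingN_apply]
  subst hd
  ring

end Coordinates

section Complement

theorem latIsometric_orthC {ι κ V : Type} [Fintype ι] [Fintype κ] [AddCommGroup V] [Module ℤ V]
    {G : Matrix ι ι ℤ} {H : Matrix κ κ ℤ} {Q : QuadraticForm ℤ V} {r : ι → ℤ} {s : V}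
    (φ : (ι → ℤ) ≃ₗ[ℤ] V) (hφ : ∀ x y, polar Q (φ x) (φ y) = bilin G x y)
    (hrs : SameOrbit Q (φ r) s) (f : (κ → ℤ) →ₗ[ℤ] V) (hinj : Function.Injective f)
    (hrange : ∀ v, polar Q v s = 0 ↔ ∃ n, f n = v)
    (hf : ∀ n n', polar Q (f n) (f n') = bilin H n n') :
    LatIsometric (fun x y : orthC G r => bilin G x y) (bilin H) := by
  obtain ⟨e, rfl⟩ := hrs
  let ψ : (ι → ℤ) ≃ₗ[ℤ] V := φ.trans e.toLinearEquiv
  have hψ (x y : ι → ℤ) : polar Q (ψ x) (ψ y) = bilin G x y :=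
    (polar_isometryEquiv e _ _).trans (hφ x y)
  have hmem (x : ι → ℤ) : x ∈ orthC G r ↔ ∃ n, f n = ψ x :=
    ((hψ x r).symm.congr_left).trans (hrange (ψ x))
  let g : (κ → ℤ) →ₗ[ℤ] orthC G r :=
    (ψ.symm.toLinearMap ∘ₗ f).codRestrict _ fun n => (hmem _).mpr ⟨n, by simp⟩
  have hg (n : κ → ℤ) : ψ (g n) = f n := ψ.apply_symm_apply (f n)
  have hbij : Function.Bijective g := by
    refine ⟨fun n n' h => hinj ?_, fun x => ?_⟩
    · rw [← hg, ← hg, h]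
    · obtain ⟨n, hn⟩ := (hmem x).mp x.2
      exact ⟨n, Subtype.ext (ψ.injective ((hg n).trans hn))⟩
  refine ⟨(LinearEquiv.ofBijective g hbij).symm, fun x y => ?_⟩
  obtain ⟨n, rfl⟩ := hbij.2 x
  obtain ⟨n', rfl⟩ := hbij.2 y
  simp only [LinearEquiv.ofBijective_symm_apply_apply, ← hf, ← hψ, hg]

variable {ι : Type} [Fintype ι] {M : Matrix ι ι ℤ} {Q : QuadraticForm ℤ (ι → ℤ)} {d : ℤ}
  {r : ((Fin 2 ⊕ Fin 2) ⊕ ι) ⊕ Fin 1 → ℤ}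

theorem isPolarDivisor_coordinatesL (hQ : ∀ x y, polar Q x y = bilin M x y) {D : ℤ}
    (hD : IsDivisorOf (gramLOf M d) r D) : IsPolarDivisor (formL Q d) (coordinatesL ι r) D := by
  obtain ⟨-, hdvd, l, hl⟩ := hD
  refine ⟨fun v => ?_, coordinatesL ι l, (polar_coordinatesL hQ d r l).trans hl⟩
  rw [← (coordinatesL ι).apply_symm_apply v, polar_coordinatesL hQ]
  exact hdvd _

theorem formL_coordinatesL (hQ : ∀ x y, polar Q x y = bilin M x y)
    (hr : bilin (gramLOf M d) r r = -2) : formL Q d (coordinatesL ι r) = -1 := by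
  have hself := QuadraticMap.polar_self (formL Q d) (coordinatesL ι r)
  rw [polar_coordinatesL hQ, hr, two_nsmul] at hself
  linarith

theorem latIsometric_orthC_of_isDivisorOf_one (hQ : ∀ x y, polar Q x y = bilin M x y)
    (hr : bilin (gramLOf M d) r r = -2) (hdiv : IsDivisorOf (gramLOf M d) r 1) :
    LatIsometric (fun x y : orthC (gramLOf M d) r => bilin (gramLOf M d) x y)
      (bilin (gramKOf M d)) := by
  have horbit : SameOrbit (formL Q d) (coordinatesL ι r) ((1, -1), 0, 0, 0) :=
    sameOrbit_of_isPolarDivisor_one (isPolarDivisor_coordinatesL hQ hdiv) (formL_coordinatesL hQ hr)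
  exact latIsometric_orthC (coordinatesL ι) (polar_coordinatesL hQ d) horbit (embeddingK ι)
    (embeddingK_injective ι) (fun _ => polar_eq_zero_iff_exists_embeddingK_eq)
    (polar_embeddingK hQ d)

theorem latIsometric_orthC_of_isDivisorOf_two [DecidableEq ι] (hsymm : M.IsSymm)
    (hdet : Odd M.det) (hQ : ∀ x y, polar Q x y = bilin M x y)
    (hr : bilin (gramLOf M d) r r = -2) (hdiv : IsDivisorOf (gramLOf M d) r 2) :
    LatIsometric (fun x y : orthC (gramLOf M d) r => bilin (gramLOf M d) x y)
      (bilin (gramNOf M d)) := by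
  obtain ⟨β, hd, horbit⟩ := exists_sameOrbit_of_isPolarDivisor_two hsymm hdet hQ
    (isPolarDivisor_coordinatesL hQ hdiv) (formL_coordinatesL hQ hr)
  exact latIsometric_orthC (coordinatesL ι) (polar_coordinatesL hQ d) horbit (embeddingN ι β)
    (embeddingN_injective ι β) (fun _ => polar_eq_zero_iff_exists_embeddingN_eq hd)
    (polar_embeddingN hQ hd)

end Complement

section E8

open scoped Kronecker

theorem gramE8copies_eq_kronecker (m : ℕ) :
    gramE8copies m = (1 : Matrix (Fin m) (Fin m) ℤ) ⊗ₖ gramE8neg := by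
  ext p q
  simp [gramE8copies, Matrix.one_apply]

theorem isSymm_gramE8copies (m : ℕ) : (gramE8copies m).IsSymm := by
  rw [gramE8copies_eq_kronecker, Matrix.IsSymm, ← Matrix.kroneckerMap_transpose,
    Matrix.transpose_one, gramE8neg, Matrix.transpose_neg, CartanMatrix.E₈_transpose]

theorem even_gramE8copies_apply_self (m : ℕ) (p : Fin m × Fin 8) : Even (gramE8copies m p p) := by
  simp [gramE8copies, gramE8neg, CartanMatrix.E₈_diag]

theorem det_gramE8copies (m : ℕ) : (gramE8copies m).det = 1 := by
  rw [gramE8copies_eq_kronecker, Matrix.det_kronecker]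
  simp [gramE8neg, Matrix.det_neg, CartanMatrix.E₈_det]

end E8

theorem orthogonal_complement_of_minus_two_vector_in_L2d_general {ι : Type} [Fintype ι]
    [DecidableEq ι] {M : Matrix ι ι ℤ} (hsymm : M.IsSymm) (hdiag : ∀ i, Even (M i i))
    (hdet : Odd M.det) {d : ℤ} {r : ((Fin 2 ⊕ Fin 2) ⊕ ι) ⊕ Fin 1 → ℤ}
    (hr : bilin (gramLOf M d) r r = -2) :
    (IsDivisorOf (gramLOf M d) r 1 →
      LatIsometric (fun x y : orthC (gramLOf M d) r => bilin (gramLOf M d) x y)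
        (bilin (gramKOf M d))) ∧
    (IsDivisorOf (gramLOf M d) r 2 →
      LatIsometric (fun x y : orthC (gramLOf M d) r => bilin (gramLOf M d) x y)
        (bilin (gramNOf M d))) := by
  obtain ⟨Q, hQ⟩ := exists_quadraticForm_polar_eq_bilin hsymm hdiag
  exact ⟨latIsometric_orthC_of_isDivisorOf_one hQ hr,
    latIsometric_orthC_of_isDivisorOf_two hsymm hdet hQ hr⟩

/-- Let `r` be a primitive vector with `(r,r) = −2` in
`L = L_{2d}^{(m)}` and let `K_r` be its orthogonal complement with the restricted form.
If `div(r) = 1` then `K_r ≅ K_{2d}^{(m)} = U ⊕ mE₈(−1) ⊕ ⟨2⟩ ⊕ ⟨−2d⟩`, and if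
`div(r) = 2` (so that `d ≡ 1 mod 4`) then `K_r ≅ N_{2d}^{(m)} = U ⊕ mE₈(−1) ⊕ B`
with `B = [[2,1],[1,(1−d)/2]]`. -/
theorem orthogonal_complement_of_minus_two_vector_in_L2d
    (m d : ℕ) (hd : 1 ≤ d) (r : IdxL m → ℤ) (hprim : IsPrim r)
    (hr : bilin (gramL m d) r r = -2) :
    (IsDivisorOf (gramL m d) r 1 →
      LatIsometric
        (fun x y : ↥(orthC (gramL m d) r) =>
          bilin (gramL m d) (x : IdxL m → ℤ) (y : IdxL m → ℤ))
        (bilin (gramK2d m d))) ∧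
    (IsDivisorOf (gramL m d) r 2 →
      LatIsometric
        (fun x y : ↥(orthC (gramL m d) r) =>
          bilin (gramL m d) (x : IdxL m → ℤ) (y : IdxL m → ℤ))
        (bilin (gramN2d m d))) := by
  exact orthogonal_complement_of_minus_two_vector_in_L2d_general (isSymm_gramE8copies m)
    (even_gramE8copies_apply_self m) (det_gramE8copies m ▸ odd_one) hr
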